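/- Let (R, m) be a commutative Noetherian local ring, M a finitely generated R-module of Krull dimension n, and I an ideal of R such that dim(M/IM) = d. Then n − d ≤ cd(I,M). -/

import Mathlib

universe u

open CategoryTheory

/-- The cohomological dimension of `M` with respect to `I`:
`cd(I,M) = sup { i ∈ ℕ | H^i_I(M) ≠ 0 }`, as an element of `ℕ∞`. -/
noncomputable def cohomologicalDimension {R : Type u} [CommRing R] (I : Ideal R)
    (M : ModuleCat.{u} R) : ℕ∞ :=
  sSup {c : ℕ∞ | ∃ i : ℕ, c = i ∧ Nontrivial ((localCohomology I i).obj M)}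

/-!
A module with `Γ_I(M) = M` has no local cohomology in positive degrees, so passing from `M` to
`M / Γ_I(M)` changes neither the modules `Hⁱ_I`, `i > 0`, nor `dim M` when `dim M/IM < dim M`, and
provides an `M`-regular element `x` of the maximal ideal avoiding any finitely many other primes.
By induction on `dim M`, the modules `Hⁱ_I(M)` with `i ≥ dim M - dim M/IM > 0` are not all finitely
generated, let alone zero.

* If `dim M/IM > 0`, let `x` avoid the minimal primes of `M/IM`. Then both dimensions drop for
  `M/xM`, and the finiteness of all `Hⁱ_I(M)`, `i ≥ k`, is inherited by `M/xM`.
* If `dim M/IM = 0`, the modules `Hⁱ_I(M)` are Artinian. Let `x` avoid the attached primes of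
  `H = Hᵏ_I(M)` other than the maximal ideal; then `H/xH` has finite length, and from the
  finiteness of `Hⁱ_I(M)` for `i > k` one gets that of `Hⁱ_I(M/xM)` for `i ≥ k`.
* If `dim M = 1` and `Γ_I(M) = 0`, suppose that `x ∈ I` is regular and `xˢ` kills `H¹_I(M)`. As
  `M/xˢ⁺¹M` embeds into `H¹_I(M)`, this gives `xˢM = xˢ⁺¹M`, hence `M = xM`, against Nakayama.
-/

section ExactPair

open Limits

variable {C D : Type*} [Category* C] [Category* D] [Abelian D]

/-- Exactness of `X ⟶ Y ⟶ Z` at `Y`, including the vanishing of the composition, so that it can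
be stated without a proof of that vanishing at hand. -/
def ExactPair {X Y Z : D} (f : X ⟶ Y) (g : Y ⟶ Z) : Prop :=
  ∃ w : f ≫ g = 0, (ShortComplex.mk f g w).Exact

namespace ExactPair

lemma of_iso {X Y Z X' Y' Z' : D} {f : X ⟶ Y} {g : Y ⟶ Z} {f' : X' ⟶ Y'} {g' : Y' ⟶ Z'}
    (h : ExactPair f g) (a : X' ≅ X) (b : Y' ≅ Y) (c : Z' ≅ Z) (hf : f' ≫ b.hom = a.hom ≫ f)
    (hg : g' ≫ c.hom = b.hom ≫ g) : ExactPair f' g' := by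
  obtain ⟨w, h⟩ := h
  have w' : f' ≫ g' = 0 := by
    rw [← cancel_mono c.hom, Category.assoc, hg, reassoc_of% hf, w, comp_zero, zero_comp]
  exact ⟨w', (ShortComplex.exact_iff_of_iso (ShortComplex.isoMk a b c hf.symm hg.symm)).2 h⟩

lemma of_forall_app {F G H : C ⥤ D} {α : F ⟶ G} {β : G ⟶ H}
    (h : ∀ X, ExactPair (α.app X) (β.app X)) : ExactPair α β := by
  have w : α ≫ β = 0 := by
    ext X
    exact (h X).1
  refine ⟨w, (ShortComplex.exact_iff_isZero_homology _).2 (Functor.isZero _ fun X => ?_)⟩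
  exact ((ShortComplex.exact_iff_isZero_homology _).1 (h X).2).of_iso
    ((ShortComplex.mk α β w).mapHomologyIso ((evaluation C D).obj X)).symm

lemma map {A : Type*} [Category* A] [Abelian A] {X Y Z : D} {f : X ⟶ Y} {g : Y ⟶ Z}
    (h : ExactPair f g) (F : D ⥤ A) [F.PreservesZeroMorphisms] [F.PreservesHomology] :
    ExactPair (F.map f) (F.map g) :=
  ⟨_, h.2.map F⟩

lemma unop {X Y Z : Dᵒᵖ} {f : X ⟶ Y} {g : Y ⟶ Z} (h : ExactPair f g) :
    ExactPair g.unop f.unop :=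
  ⟨congrArg Quiver.Hom.unop h.1, h.2.unop⟩

lemma leftOp {F G H : C ⥤ Dᵒᵖ} {α : F ⟶ G} {β : G ⟶ H} (h : ExactPair α β) :
    ExactPair (NatTrans.leftOp β) (NatTrans.leftOp α) :=
  .of_forall_app fun X => (h.map ((evaluation C Dᵒᵖ).obj X.unop)).unop

lemma colimMap {J : Type*} [Category* J] [HasColimitsOfShape J D] [HasExactColimitsOfShape J D]
    {F G H : J ⥤ D} {α : F ⟶ G} {β : G ⟶ H} (h : ExactPair α β) :
    ExactPair (colim.map α) (colim.map β) :=
  ⟨_, colim.exact_mapShortComplex (S := ShortComplex.mk α β h.1) h.2 (colimit.isColimit _)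
    (colimit.isColimit _) (colimit.isColimit _) _ _ (fun _ => ι_colimMap _ _)
    (fun _ => ι_colimMap _ _)⟩

end ExactPair

lemma exactPair_iff_function_exact {R : Type*} [Ring R] {X Y Z : ModuleCat R} {f : X ⟶ Y}
    {g : Y ⟶ Z} : ExactPair f g ↔ Function.Exact f g := by
  refine ⟨fun ⟨_, h⟩ => (ShortComplex.ShortExact.moduleCat_exact_iff_function_exact _).1 h,
    fun h => ⟨?_, (ShortComplex.ShortExact.moduleCat_exact_iff_function_exact _).2 h⟩⟩
  ext x
  exact h.apply_apply_eq_zero x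

end ExactPair

section LeftDerived

open Limits HomologicalComplex

variable {C D : Type*} [Category* C] [Category* D] [Abelian C] [Abelian D]

/-- The short complex of chain complexes obtained by applying a sequence of additive functors
to a chain complex. -/
noncomputable abbrev shortComplexMapChainComplex (S : ShortComplex (C ⥤ D)) [S.X₁.Additive]
    [S.X₂.Additive] [S.X₃.Additive] (K : ChainComplex C ℕ) : ShortComplex (ChainComplex D ℕ) where
  X₁ := (S.X₁.mapHomologicalComplex _).obj K
  X₂ := (S.X₂.mapHomologicalComplex _).obj K
  X₃ := (S.X₃.mapHomologicalComplex _).obj K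
  f := (NatTrans.mapHomologicalComplex S.f _).app K
  g := (NatTrans.mapHomologicalComplex S.g _).app K
  zero := by
    ext i
    exact congr_app S.zero (K.X i)

lemma shortComplexMapChainComplex_shortExact {S : ShortComplex (C ⥤ D)} [S.X₁.Additive]
    [S.X₂.Additive] [S.X₃.Additive]
    (hS : ∀ (P : C) [Projective P], (S.map ((evaluation C D).obj P)).ShortExact)
    (K : ChainComplex C ℕ) [∀ i, Projective (K.X i)] :
    (shortComplexMapChainComplex S K).ShortExact :=
  shortExact_of_degreewise_shortExact _ fun i => hS (K.X i)

variable [EnoughProjectives C]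

/-- The value of a left derived functor, computed from the chosen projective resolution. -/
noncomputable def leftDerivedObjIso (F : C ⥤ D) [F.Additive] (n : ℕ) (X : C) :
    (F.leftDerived n).obj X ≅
      ((F.mapHomologicalComplex _).obj (projectiveResolution X).complex).homology n :=
  (projectiveResolution X).isoLeftDerivedObj F n

lemma leftDerived_app_comp_leftDerivedObjIso_hom {F G : C ⥤ D} [F.Additive] [G.Additive]
    (α : F ⟶ G) (n : ℕ) (X : C) :
    (NatTrans.leftDerived α n).app X ≫ (leftDerivedObjIso G n X).hom =
      (leftDerivedObjIso F n X).hom ≫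
        homologyMap
          ((NatTrans.mapHomologicalComplex α _).app (projectiveResolution X).complex) n := by
  rw [← Iso.eq_comp_inv, Category.assoc]
  exact (projectiveResolution X).leftDerived_app_eq α n

lemma leftDerived_app_of_center {F : C ⥤ D} [F.Additive] {α : F ⟶ F} (σ : CatCenter D)
    (hα : ∀ X, α.app X = σ.app (F.obj X)) (n : ℕ) (X : C) :
    (NatTrans.leftDerived α n).app X = σ.app _ := by
  let K := (F.mapHomologicalComplex (.down ℕ)).obj (projectiveResolution X).complex
  let f : K ⟶ K := (NatTrans.mapHomologicalComplex α _).app (projectiveResolution X).complex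
  have hf : homologyMap f n = σ.app (K.homology n) := by
    have hZ : cyclesMap f n = σ.app (K.cycles n) := by
      rw [← cancel_mono (K.iCycles n), cyclesMap_i, ← CatCenter.naturality]
      exact K.iCycles n ≫= hα _
    rw [← cancel_epi (K.homologyπ n), homologyπ_naturality, CatCenter.naturality, hZ]
  rw [← cancel_mono (leftDerivedObjIso F n X).hom, leftDerived_app_comp_leftDerivedObjIso_hom,
    ← CatCenter.naturality]
  exact _ ≫= hf

lemma leftDerived_zero_app_comp_fromLeftDerivedZero_app {F G : C ⥤ D} [F.Additive] [G.Additive]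
    (α : F ⟶ G) (X : C) :
    (NatTrans.leftDerived α 0).app X ≫ G.fromLeftDerivedZero.app X =
      F.fromLeftDerivedZero.app X ≫ α.app X := by
  let P := projectiveResolution X
  have hι (F : C ⥤ D) [F.Additive] : F.fromLeftDerivedZero.app X =
      (leftDerivedObjIso F 0 X).hom ≫ homologyι _ 0 ≫ P.fromLeftDerivedZero' F :=
    P.fromLeftDerivedZero_eq F
  have hp (F : C ⥤ D) [F.Additive] :
      pOpcycles _ 0 ≫ P.fromLeftDerivedZero' F = F.map (P.π.f 0) :=
    P.pOpcycles_comp_fromLeftDerivedZero' F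
  rw [hι, hι, reassoc_of% leftDerived_app_comp_leftDerivedObjIso_hom α,
    homologyι_naturality_assoc, Category.assoc, Category.assoc]
  congr 2
  rw [← cancel_epi (pOpcycles _ _), p_opcyclesMap_assoc, hp, reassoc_of% hp]
  exact (α.naturality (P.π.f 0)).symm

variable {S : ShortComplex (C ⥤ D)} [S.X₁.Additive] [S.X₂.Additive] [S.X₃.Additive]
  (hS : ∀ (P : C) [Projective P], (S.map ((evaluation C D).obj P)).ShortExact)
include hS

lemma leftDerived_exactPair (n : ℕ) :
    ExactPair (NatTrans.leftDerived S.f n) (NatTrans.leftDerived S.g n) :=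
  .of_forall_app fun X => .of_iso
    ⟨_, (shortComplexMapChainComplex_shortExact hS
      (projectiveResolution X).complex).homology_exact₂ n⟩
    (leftDerivedObjIso S.X₁ n X) (leftDerivedObjIso S.X₂ n X) (leftDerivedObjIso S.X₃ n X)
    (leftDerived_app_comp_leftDerivedObjIso_hom S.f n X)
    (leftDerived_app_comp_leftDerivedObjIso_hom S.g n X)

/-- The connecting morphism of left derived functors, computed from the homology sequence of
the chosen projective resolutions. -/
noncomputable def leftDerivedδ (n : ℕ) : S.X₃.leftDerived (n + 1) ⟶ S.X₁.leftDerived n where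
  app X := (leftDerivedObjIso S.X₃ (n + 1) X).hom ≫
    (shortComplexMapChainComplex_shortExact hS (projectiveResolution X).complex).δ (n + 1) n
      (by simp) ≫ (leftDerivedObjIso S.X₁ n X).inv
  naturality X Y f := by
    let φ := ProjectiveResolution.lift f (projectiveResolution X) (projectiveResolution Y)
    have hf (F : C ⥤ D) [F.Additive] (n : ℕ) :
        (F.leftDerived n).map f ≫ (leftDerivedObjIso F n Y).hom =
          (leftDerivedObjIso F n X).hom ≫
            homologyMap ((F.mapHomologicalComplex _).map φ) n :=
      ProjectiveResolution.isoLeftDerivedObj_hom_naturality f _ _ φ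
        (ProjectiveResolution.lift_commutes_zero f _ _) F n
    have hδ := HomologySequence.δ_naturality
      { τ₁ := (S.X₁.mapHomologicalComplex _).map φ
        τ₂ := (S.X₂.mapHomologicalComplex _).map φ
        τ₃ := (S.X₃.mapHomologicalComplex _).map φ
        comm₁₂ := (NatTrans.mapHomologicalComplex S.f _).naturality φ
        comm₂₃ := (NatTrans.mapHomologicalComplex S.g _).naturality φ }
      (shortComplexMapChainComplex_shortExact hS (projectiveResolution X).complex)
      (shortComplexMapChainComplex_shortExact hS (projectiveResolution Y).complex)
      (n + 1) n (by simp)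
    rw [← cancel_mono (leftDerivedObjIso S.X₁ n Y).hom]
    simp only [Category.assoc, Iso.inv_hom_id, Category.comp_id, reassoc_of% hf, hf,
      Iso.inv_hom_id_assoc]
    rw [hδ]

lemma leftDerivedδ_app_comp_leftDerivedObjIso_hom (n : ℕ) (X : C) :
    (leftDerivedδ hS n).app X ≫ (leftDerivedObjIso S.X₁ n X).hom =
      (leftDerivedObjIso S.X₃ (n + 1) X).hom ≫
        (shortComplexMapChainComplex_shortExact hS (projectiveResolution X).complex).δ
          (n + 1) n (by simp) := by
  simp [leftDerivedδ]

lemma leftDerived_leftDerivedδ_exactPair (n : ℕ) :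
    ExactPair (NatTrans.leftDerived S.g (n + 1)) (leftDerivedδ hS n) :=
  .of_forall_app fun X => .of_iso
    ⟨_, (shortComplexMapChainComplex_shortExact hS
      (projectiveResolution X).complex).homology_exact₃ (n + 1) n (by simp)⟩
    (leftDerivedObjIso S.X₂ (n + 1) X) (leftDerivedObjIso S.X₃ (n + 1) X)
    (leftDerivedObjIso S.X₁ n X) (leftDerived_app_comp_leftDerivedObjIso_hom S.g (n + 1) X)
    (leftDerivedδ_app_comp_leftDerivedObjIso_hom hS n X)

lemma leftDerivedδ_leftDerived_exactPair (n : ℕ) :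
    ExactPair (leftDerivedδ hS n) (NatTrans.leftDerived S.f n) :=
  .of_forall_app fun X => .of_iso
    ⟨_, (shortComplexMapChainComplex_shortExact hS
      (projectiveResolution X).complex).homology_exact₁ (n + 1) n (by simp)⟩
    (leftDerivedObjIso S.X₃ (n + 1) X) (leftDerivedObjIso S.X₁ n X)
    (leftDerivedObjIso S.X₂ n X) (leftDerivedδ_app_comp_leftDerivedObjIso_hom hS n X)
    (leftDerived_app_comp_leftDerivedObjIso_hom S.f n X)

end LeftDerived

section ExtFunctor

open Limits Opposite

variable {R : Type*} [Ring R] {C : Type*} [Category* C] [Abelian C] [Linear R C]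

variable (R) in
/-- The sequence `Hom(-, Z) ⟶ Hom(-, Y) ⟶ Hom(-, X)` in the opposite of the category of modules,
so that its left derived functors are the `Ext` functors. -/
abbrev homRightOpShortComplex (S : ShortComplex C) : ShortComplex (C ⥤ (ModuleCat R)ᵒᵖ) where
  X₁ := ((linearYoneda R C).obj S.X₃).rightOp
  X₂ := ((linearYoneda R C).obj S.X₂).rightOp
  X₃ := ((linearYoneda R C).obj S.X₁).rightOp
  f := NatTrans.rightOp ((linearYoneda R C).map S.g)
  g := NatTrans.rightOp ((linearYoneda R C).map S.f)
  zero := by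
    ext P
    apply Quiver.Hom.unop_inj
    ext (x : P ⟶ S.X₁)
    exact (Category.assoc x S.f S.g).trans (by rw [S.zero, comp_zero]; rfl)

lemma homRightOpShortComplex_shortExact {S : ShortComplex C} (hS : S.ShortExact) (P : C)
    [Projective P] :
    ((homRightOpShortComplex R S).map ((evaluation C (ModuleCat R)ᵒᵖ).obj P)).ShortExact := by
  have := hS.mono_f
  have := hS.epi_g
  have hP : ((homRightOpShortComplex R S).map
      ((evaluation C (ModuleCat R)ᵒᵖ).obj P)).unop.ShortExact :=
    { exact := (ShortComplex.moduleCat_exact_iff _).2 fun (x : P ⟶ S.X₂) hx =>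
        ⟨hS.exact.lift x hx, hS.exact.lift_f x hx⟩
      mono_f := (ModuleCat.mono_iff_injective _).2 fun (x y : P ⟶ S.X₁) h =>
        (cancel_mono S.f).1 h
      epi_g := (ModuleCat.epi_iff_surjective _).2 fun (x : P ⟶ S.X₃) =>
        ⟨Projective.factorThru x S.g, Projective.factorThru_comp x S.g⟩ }
  exact hP.op

variable [EnoughProjectives C]

lemma Ext_map_exactPair {S : ShortComplex C} (hS : S.ShortExact) (n : ℕ) :
    ExactPair ((Ext R C n).flip.map S.f) ((Ext R C n).flip.map S.g) :=
  (leftDerived_exactPair (homRightOpShortComplex_shortExact hS) n).leftOp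

/-- The connecting morphism `Extⁿ(-, Z) ⟶ Extⁿ⁺¹(-, X)` of a short exact sequence
`0 ⟶ X ⟶ Y ⟶ Z ⟶ 0`. -/
noncomputable def Extδ {S : ShortComplex C} (hS : S.ShortExact) (n : ℕ) :
    (Ext R C n).flip.obj S.X₃ ⟶ (Ext R C (n + 1)).flip.obj S.X₁ :=
  NatTrans.leftOp (leftDerivedδ (homRightOpShortComplex_shortExact hS) n)

lemma Ext_map_Extδ_exactPair {S : ShortComplex C} (hS : S.ShortExact) (n : ℕ) :
    ExactPair ((Ext R C n).flip.map S.g) (Extδ hS n) :=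
  (leftDerivedδ_leftDerived_exactPair (homRightOpShortComplex_shortExact hS) n).leftOp

lemma Extδ_Ext_map_exactPair {S : ShortComplex C} (hS : S.ShortExact) (n : ℕ) :
    ExactPair (Extδ hS n) ((Ext R C (n + 1)).flip.map S.f) :=
  (leftDerived_leftDerivedδ_exactPair (homRightOpShortComplex_shortExact hS) n).leftOp

lemma isZero_Ext_succ_of_injective (n : ℕ) (X : Cᵒᵖ) (J : C) [Injective J] :
    IsZero (((Ext R C (n + 1)).obj X).obj J) := by
  let P := projectiveResolution X.unop
  refine IsZero.of_iso ?_ (P.isoExt (n + 1) J)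
  rw [← HomologicalComplex.exactAt_iff_isZero_homology,
    HomologicalComplex.exactAt_iff' _ n (n + 1) (n + 2) (by simp) (by simp),
    ShortComplex.moduleCat_exact_iff]
  intro (x : P.complex.X (n + 1) ⟶ J) (hx : P.complex.d (n + 2) (n + 1) ≫ x = 0)
  have hP : (P.complex.sc' (n + 2) (n + 1) n).Exact := P.exact_succ n
  exact ⟨hP.descToInjective x hx, hP.comp_descToInjective x hx⟩

instance preservesFiniteColimits_linearYoneda_rightOp (Y : C) :
    PreservesFiniteColimits ((linearYoneda R C).obj Y).rightOp := by
  have : PreservesLimits ((linearYoneda R C).obj Y ⋙ forget _) :=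
    inferInstanceAs (PreservesLimits (yoneda.obj Y))
  have : PreservesLimits ((linearYoneda R C).obj Y) :=
    preservesLimits_of_reflects_of_preserves _ (forget (ModuleCat R))
  have := PreservesLimits.preservesFiniteLimits ((linearYoneda R C).obj Y)
  exact preservesFiniteColimits_rightOp _

variable (R C) in
/-- The natural isomorphism `Hom(X, Y) ≅ Ext⁰(X, Y)`. -/
noncomputable def linearCoyonedaIsoExtZero : linearCoyoneda R C ≅ Ext R C 0 :=
  NatIso.ofComponents
    (fun X => NatIso.ofComponents
      (fun Y => (((linearYoneda R C).obj Y).rightOp.leftDerivedZeroIsoSelf.app X.unop).unop)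
      fun f => congrArg Quiver.Hom.unop (leftDerived_zero_app_comp_fromLeftDerivedZero_app
        (NatTrans.rightOp ((linearYoneda R C).map f)) X.unop).symm)
    fun {X X'} f => by
      ext Y : 2
      exact congrArg Quiver.Hom.unop
        (((linearYoneda R C).obj Y).rightOp.fromLeftDerivedZero.naturality f.unop).symm

end ExtFunctor

section ExtLinear

open Opposite

variable {R : Type*} [CommRing R] {C : Type*} [Category* C] [Abelian C] [Linear R C]
  [EnoughProjectives C]

lemma Ext_map_smul_id (a : R) (n : ℕ) (X : Cᵒᵖ) (Y : C) :
    ((Ext R C n).obj X).map (a • 𝟙 Y) = a • 𝟙 _ := by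
  let σ : CatCenter (ModuleCat R)ᵒᵖ := NatTrans.op (Linear.toCatCenter R (ModuleCat R) a)
  have hσ (P : C) :
      (NatTrans.rightOp ((linearYoneda R C).map (a • 𝟙 Y))).app P = σ.app (op (.of R (P ⟶ Y))) := by
    apply Quiver.Hom.unop_inj
    ext (x : P ⟶ Y)
    exact (Linear.comp_smul _ _ _ x a (𝟙 Y)).trans (by rw [Category.comp_id]; rfl)
  exact congrArg Quiver.Hom.unop (leftDerived_app_of_center σ hσ n X.unop)

end ExtLinear

section PowTorsion

variable {R : Type*} [CommRing R] (I : Ideal R) (M : Type*) [AddCommGroup M] [Module R M]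

/-- The property of being an `I`-torsion module: every element is annihilated by a power of `I`. -/
def IsPowTorsion : Prop := ∀ m : M, ∃ t : ℕ, ∀ a ∈ I ^ t, a • m = 0

/-- The `I`-torsion submodule `Γ_I(M)`, consisting of the elements annihilated by a power of `I`. -/
def powTorsion : Submodule R M where
  carrier := {m | ∃ t : ℕ, ∀ a ∈ I ^ t, a • m = 0}
  zero_mem' := ⟨0, fun a _ => smul_zero a⟩
  add_mem' := by
    rintro m n ⟨s, hs⟩ ⟨t, ht⟩
    refine ⟨max s t, fun a ha => ?_⟩
    rw [smul_add, hs a (Ideal.pow_le_pow_right (le_max_left s t) ha),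
      ht a (Ideal.pow_le_pow_right (le_max_right s t) ha), add_zero]
  smul_mem' := by
    rintro r m ⟨s, hs⟩
    exact ⟨s, fun a ha => by rw [smul_comm, hs a ha, smul_zero]⟩

lemma isPowTorsion_powTorsion : IsPowTorsion I (powTorsion I M) := by
  rintro ⟨m, t, ht⟩
  exact ⟨t, fun a ha => Subtype.ext (ht a ha)⟩

variable {I M} {N : Type*} [AddCommGroup N] [Module R N]

lemma IsPowTorsion.of_injective (hN : IsPowTorsion I N) {f : M →ₗ[R] N}
    (hf : Function.Injective f) : IsPowTorsion I M := by
  intro m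
  obtain ⟨t, ht⟩ := hN (f m)
  exact ⟨t, fun a ha => hf (by rw [map_smul, ht a ha, map_zero])⟩

lemma IsPowTorsion.map_mem_powTorsion (hM : IsPowTorsion I M) (f : M →ₗ[R] N) (m : M) :
    f m ∈ powTorsion I N := by
  obtain ⟨t, ht⟩ := hM m
  exact ⟨t, fun a ha => by rw [← map_smul, ht a ha, map_zero]⟩

lemma IsPowTorsion.of_surjective (hM : IsPowTorsion I M) {f : M →ₗ[R] N}
    (hf : Function.Surjective f) : IsPowTorsion I N :=
  hf.forall.2 fun m => hM.map_mem_powTorsion f m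

lemma IsPowTorsion.exists_pow_le_annihilator [Module.Finite R M] (hM : IsPowTorsion I M) :
    ∃ t : ℕ, I ^ t ≤ Module.annihilator R M := by
  obtain ⟨S, hS⟩ := Module.Finite.fg_top (R := R) (M := M)
  choose t ht using hM
  have h : Submodule.span R S ≤ Submodule.torsionBySet R M (I ^ S.sup t : Ideal R) :=
    Submodule.span_le.2 fun m hm => (Submodule.mem_torsionBySet_iff _ _).2 fun a =>
      ht m a (Ideal.pow_le_pow_right (Finset.le_sup hm) a.2)
  refine ⟨S.sup t, fun a ha => Module.mem_annihilator.2 fun m => ?_⟩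
  exact (Submodule.mem_torsionBySet_iff _ _).1 (h (hS ▸ Submodule.mem_top : m ∈ _)) ⟨a, ha⟩

lemma IsPowTorsion.exists_pow_smul_top_le_ker [Module.Finite R M] (hN : IsPowTorsion I N)
    (f : M →ₗ[R] N) : ∃ t : ℕ, I ^ t • (⊤ : Submodule R M) ≤ LinearMap.ker f := by
  obtain ⟨t, ht⟩ :=
    (hN.of_injective (LinearMap.range f).subtype_injective).exists_pow_le_annihilator
  exact ⟨t, Submodule.smul_le.2 fun a ha m _ => (map_smul f a m).trans
    (congrArg Subtype.val (Module.mem_annihilator.1 (ht ha) (f.rangeRestrict m)))⟩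

variable (I M) in
lemma powTorsion_quotient_powTorsion [IsNoetherianRing R] :
    powTorsion I (M ⧸ powTorsion I M) = ⊥ := by
  refine eq_bot_iff.2 fun q ⟨t, ht⟩ => ?_
  obtain ⟨m, rfl⟩ := Submodule.mkQ_surjective _ q
  have hm (b : ↥(I ^ t)) : LinearMap.toSpanSingleton R M m b ∈ powTorsion I M :=
    (Submodule.Quotient.mk_eq_zero _).1 (ht b b.2)
  obtain ⟨s, hs⟩ := (isPowTorsion_powTorsion I M).exists_pow_smul_top_le_ker
    ((LinearMap.toSpanSingleton R M m ∘ₗ (I ^ t).subtype).codRestrict _ hm)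
  have hmul : I ^ s * I ^ t ≤ LinearMap.ker (LinearMap.toSpanSingleton R M m) :=
    Ideal.mul_le.2 fun a ha b hb => by
      have hab := hs (Submodule.smul_mem_smul ha (Submodule.mem_top (x := (⟨b, hb⟩ : ↥(I ^ t)))))
      exact congrArg Subtype.val hab
  exact (Submodule.Quotient.mk_eq_zero _).2 ⟨s + t, fun a ha => hmul (pow_add I s t ▸ ha)⟩

end PowTorsion

section InjectivePowTorsion

variable {R : Type u} [CommRing R] {I : Ideal R} {M N : Type u} [AddCommGroup M] [Module R M]
  [AddCommGroup N] [Module R N]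

lemma IsPowTorsion.exists_forall_mem_pow_smul_top_map_eq_zero [IsNoetherianRing R]
    [Module.Finite R M] (hN : IsPowTorsion I N) {K : Submodule R M} (f : K →ₗ[R] N) :
    ∃ n : ℕ, ∀ x : K, (x : M) ∈ I ^ n • (⊤ : Submodule R M) → f x = 0 := by
  obtain ⟨t, ht⟩ := hN.exists_pow_smul_top_le_ker f
  obtain ⟨k, hk⟩ := Ideal.exists_pow_inf_eq_pow_smul I K
  have hkt := hk (k + t) (Nat.le_add_right k t)
  rw [Nat.add_sub_cancel_left] at hkt
  refine ⟨k + t, fun x hx => ?_⟩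
  have hxK : (x : M) ∈ Submodule.map K.subtype (I ^ t • ⊤) := by
    rw [Submodule.map_smul'', Submodule.map_top, Submodule.range_subtype]
    exact Submodule.smul_mono le_rfl inf_le_right (hkt.le ⟨hx, x.2⟩)
  obtain ⟨y, hy, hyx⟩ := hxK
  exact Subtype.ext hyx ▸ ht hy

lemma exists_extension_of_forall_mem_eq_zero [Module.Injective R N] {K L : Submodule R M}
    {f : K →ₗ[R] N} (hf : ∀ x : K, (x : M) ∈ L → f x = 0) :
    ∃ g : M →ₗ[R] N, (∀ x : K, g x = f x) ∧ ∀ x ∈ L, g x = 0 := by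
  let φ : K →ₗ[R] M ⧸ L := L.mkQ ∘ₗ K.subtype
  have hφ : LinearMap.ker φ ≤ LinearMap.ker f := fun x hx =>
    hf x ((Submodule.Quotient.mk_eq_zero L).1 hx)
  obtain ⟨h, hh⟩ := Module.Injective.out (R := R) (Q := N) ((LinearMap.ker φ).liftQ φ le_rfl)
    (LinearMap.ker_eq_bot.1 (Submodule.ker_liftQ_eq_bot _ _ _ le_rfl))
    ((LinearMap.ker φ).liftQ f hφ)
  refine ⟨h ∘ₗ L.mkQ, fun x => hh (Submodule.Quotient.mk x), fun x hx => ?_⟩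
  exact (congrArg h ((Submodule.Quotient.mk_eq_zero L).2 hx)).trans (map_zero h)

variable (I M) in
lemma injective_powTorsion [IsNoetherianRing R] [Module.Injective R M] :
    Module.Injective R (powTorsion I M) := by
  refine Module.Baer.injective fun K f => ?_
  obtain ⟨n, hn⟩ :=
    (isPowTorsion_powTorsion I M).exists_forall_mem_pow_smul_top_map_eq_zero f
  obtain ⟨g, hgf, hg⟩ := exists_extension_of_forall_mem_eq_zero
    (f := (powTorsion I M).subtype ∘ₗ f) fun x hx => congrArg Subtype.val (hn x hx)
  have hgΓ (r : R) : g r ∈ powTorsion I M :=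
    ⟨n, fun a ha => (map_smul g a r).symm.trans (hg _ (Submodule.smul_mem_smul ha trivial))⟩
  exact ⟨g.codRestrict _ hgΓ, fun x hx => Subtype.ext (hgf ⟨x, hx⟩)⟩

variable (R M) in
lemma exists_injective_linearMap_to_injective : ∃ (J : Type u) (_ : AddCommGroup J)
    (_ : Module R J) (f : M →ₗ[R] J), Function.Injective f ∧ Module.Injective R J := by
  let J : ModuleCat.{u} R := Injective.under (ModuleCat.of R M)
  have : Injective (ModuleCat.of R J) := inferInstanceAs (Injective (Injective.under _))
  exact ⟨J, inferInstance, inferInstance, (Injective.ι (ModuleCat.of R M)).hom,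
    (ModuleCat.mono_iff_injective _).1 inferInstance,
    Module.injective_module_of_injective_object R J⟩

lemma IsPowTorsion.exists_injective_linearMap_to_injective [IsNoetherianRing R]
    (hM : IsPowTorsion I M) : ∃ (J : Type u) (_ : AddCommGroup J) (_ : Module R J)
      (f : M →ₗ[R] J), Function.Injective f ∧ Module.Injective R J ∧ IsPowTorsion I J := by
  obtain ⟨J, _, _, f, hf, _⟩ := _root_.exists_injective_linearMap_to_injective R M
  exact ⟨powTorsion I J, inferInstance, inferInstance, f.codRestrict _ (hM.map_mem_powTorsion f),
    fun x y hxy => hf (congrArg Subtype.val hxy), injective_powTorsion I J,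
    isPowTorsion_powTorsion I J⟩

end InjectivePowTorsion

section LocalCohomologyFunctor

open Limits Opposite

variable {R : Type u} [CommRing R] (I : Ideal R)

instance hasExactColimitsOfShape_natOpOp_moduleCat :
    HasExactColimitsOfShape ℕᵒᵖᵒᵖ (ModuleCat.{u} R) :=
  have := AB5OfSize_shrink.{0, 0, u, u} (ModuleCat.{u} R)
  inferInstance

/-- The transformation `Extⁱ(R/Iᵗ, -) ⟶ Hⁱ_I`. -/
noncomputable def ExtToLocalCohomology (i : ℕ) (t : ℕᵒᵖᵒᵖ) :
    (Ext R (ModuleCat.{u} R) i).obj (op (.of R (R ⧸ I ^ t.unop.unop))) ⟶ localCohomology I i :=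
  have := localCohomology.hasColimitDiagram.{u, 0} (localCohomology.idealPowersDiagram I) i
  colimit.ι (localCohomology.diagram (localCohomology.idealPowersDiagram I) i) t

/-- The functor sending `M` to the direct system of modules `Extⁱ(R/Iᵗ, M)`. -/
noncomputable abbrev extPowers (i : ℕ) : ModuleCat.{u} R ⥤ ℕᵒᵖᵒᵖ ⥤ ModuleCat.{u} R :=
  (localCohomology.diagram (localCohomology.idealPowersDiagram I) i).flip

/-- Local cohomology, computed objectwise as a colimit of modules. -/
noncomputable def localCohomologyIsoColim (i : ℕ) : localCohomology I i ≅ extPowers I i ⋙ colim :=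
  colimitIsoFlipCompColim _

lemma exists_ExtToLocalCohomology_app_eq {i : ℕ} {M : ModuleCat.{u} R}
    (x : (localCohomology I i).obj M) : ∃ t y, (ExtToLocalCohomology I i t).app M y = x := by
  let F := localCohomology.diagram (localCohomology.idealPowersDiagram I) i
  have := preservesFilteredColimitsOfSize_shrink.{0, u, 0, u} (forget (ModuleCat.{u} R))
  exact Concrete.isColimit_exists_rep (F.flip.obj M)
    (isColimitOfPreserves ((evaluation _ _).obj M) (colimit.isColimit F)) x

lemma localCohomology_map_smul_id (i : ℕ) (M : ModuleCat.{u} R) (a : R) :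
    (localCohomology I i).map (a • 𝟙 M) = a • 𝟙 _ := by
  ext x
  obtain ⟨t, y, rfl⟩ := exists_ExtToLocalCohomology_app_eq I x
  have h := congr($((ExtToLocalCohomology I i t).naturality (a • 𝟙 M)) y)
  rw [Ext_map_smul_id] at h
  exact h.symm.trans (map_smul ((ExtToLocalCohomology I i t).app M).hom a y)

lemma subsingleton_localCohomology_succ_of_injective (i : ℕ) (J : ModuleCat.{u} R)
    [Injective J] : Subsingleton ((localCohomology I (i + 1)).obj J) := by
  refine subsingleton_of_forall_eq 0 fun x => ?_
  obtain ⟨t, y, rfl⟩ := exists_ExtToLocalCohomology_app_eq I x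
  have := ModuleCat.subsingleton_of_isZero
    (isZero_Ext_succ_of_injective (R := R) i (op (.of R (R ⧸ I ^ t.unop.unop))) J)
  exact (congrArg _ (Subsingleton.elim y 0)).trans (map_zero _)

variable {S : ShortComplex (ModuleCat.{u} R)} (hS : S.ShortExact) (i : ℕ)

/-- The connecting morphisms of the `Ext` modules, as a morphism of direct systems. -/
noncomputable def extPowersδ : (extPowers I i).obj S.X₃ ⟶ (extPowers I (i + 1)).obj S.X₁ :=
  Functor.whiskerLeft (localCohomology.ringModIdeals (localCohomology.idealPowersDiagram I)).op
    (Extδ hS i)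

/-- The connecting morphism of local cohomology. -/
noncomputable def localCohomologyδ :
    (localCohomology I i).obj S.X₃ ⟶ (localCohomology I (i + 1)).obj S.X₁ :=
  (localCohomologyIsoColim I i).hom.app _ ≫ colim.map (extPowersδ I hS i) ≫
    (localCohomologyIsoColim I (i + 1)).inv.app _

lemma localCohomologyδ_comp_localCohomologyIsoColim_hom_app :
    localCohomologyδ I hS i ≫ (localCohomologyIsoColim I (i + 1)).hom.app S.X₁ =
      (localCohomologyIsoColim I i).hom.app S.X₃ ≫ colim.map (extPowersδ I hS i) := by
  simp [localCohomologyδ]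

include hS in
lemma localCohomology_map_exactPair :
    ExactPair ((localCohomology I i).map S.f) ((localCohomology I i).map S.g) := by
  have h : ExactPair ((extPowers I i).map S.f) ((extPowers I i).map S.g) :=
    .of_forall_app fun t => (Ext_map_exactPair hS i).map ((evaluation _ _).obj _)
  exact h.colimMap.of_iso ((localCohomologyIsoColim I i).app _)
    ((localCohomologyIsoColim I i).app _) ((localCohomologyIsoColim I i).app _)
    ((localCohomologyIsoColim I i).hom.naturality _)
    ((localCohomologyIsoColim I i).hom.naturality _)

lemma localCohomology_map_localCohomologyδ_exactPair :
    ExactPair ((localCohomology I i).map S.g) (localCohomologyδ I hS i) := by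
  have h : ExactPair ((extPowers I i).map S.g) (extPowersδ I hS i) :=
    .of_forall_app fun t => (Ext_map_Extδ_exactPair hS i).map ((evaluation _ _).obj _)
  exact h.colimMap.of_iso ((localCohomologyIsoColim I i).app _)
    ((localCohomologyIsoColim I i).app _) ((localCohomologyIsoColim I (i + 1)).app _)
    ((localCohomologyIsoColim I i).hom.naturality _)
    (localCohomologyδ_comp_localCohomologyIsoColim_hom_app I hS i)

lemma localCohomologyδ_localCohomology_map_exactPair :
    ExactPair (localCohomologyδ I hS i) ((localCohomology I (i + 1)).map S.f) := by
  have h : ExactPair (extPowersδ I hS i) ((extPowers I (i + 1)).map S.f) :=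
    .of_forall_app fun t => (Extδ_Ext_map_exactPair hS i).map ((evaluation _ _).obj _)
  exact h.colimMap.of_iso ((localCohomologyIsoColim I i).app _)
    ((localCohomologyIsoColim I (i + 1)).app _) ((localCohomologyIsoColim I (i + 1)).app _)
    (localCohomologyδ_comp_localCohomologyIsoColim_hom_app I hS i)
    ((localCohomologyIsoColim I (i + 1)).hom.naturality _)

end LocalCohomologyFunctor

section LocalCohomologyZero

open Limits Opposite

variable {R : Type u} [CommRing R] (I : Ideal R)

/-- The transformation `Hom(R/Iᵗ, -) ⟶ H⁰_I`. -/
noncomputable def homToLocalCohomologyZero (t : ℕᵒᵖᵒᵖ) :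
    (linearCoyoneda R (ModuleCat.{u} R)).obj (op (.of R (R ⧸ I ^ t.unop.unop))) ⟶
      localCohomology I 0 :=
  (linearCoyonedaIsoExtZero R (ModuleCat.{u} R)).hom.app _ ≫ ExtToLocalCohomology I 0 t

lemma exists_homToLocalCohomologyZero_app_eq {M : ModuleCat.{u} R}
    (x : (localCohomology I 0).obj M) :
    ∃ (t : ℕᵒᵖᵒᵖ) (φ : ModuleCat.of R (R ⧸ I ^ t.unop.unop) ⟶ M),
      (homToLocalCohomologyZero I t).app M φ = x := by
  obtain ⟨t, y, rfl⟩ := exists_ExtToLocalCohomology_app_eq I x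
  let e := ((linearCoyonedaIsoExtZero R (ModuleCat.{u} R)).app
    (op (.of R (R ⧸ I ^ t.unop.unop)))).app M
  exact ⟨t, e.inv y, congrArg _ congr($(e.inv_hom_id) y)⟩

/-- Evaluation at `1`, as a transformation `Hom(R/J, -) ⟶ 𝟭`. -/
def evalOne (J : Ideal R) :
    (linearCoyoneda R (ModuleCat.{u} R)).obj (op (.of R (R ⧸ J))) ⟶ 𝟭 (ModuleCat.{u} R) where
  app M := ModuleCat.ofHom
    { toFun := fun φ : ModuleCat.of R (R ⧸ J) ⟶ M => φ.hom (Ideal.Quotient.mk J 1)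
      map_add' := fun _ _ => rfl
      map_smul' := fun _ _ => rfl }

/-- The natural transformation `H⁰_I ⟶ 𝟭` sending the class of `φ : R/Iᵗ ⟶ M` to `φ 1`. -/
noncomputable def localCohomologyZeroEval : localCohomology I 0 ⟶ 𝟭 (ModuleCat.{u} R) :=
  have := localCohomology.hasColimitDiagram.{u, 0} (localCohomology.idealPowersDiagram I) 0
  let e := linearCoyonedaIsoExtZero R (ModuleCat.{u} R)
  colimit.desc (localCohomology.diagram (localCohomology.idealPowersDiagram I) 0)
    { pt := 𝟭 _
      ι :=
        { app := fun t => e.inv.app _ ≫ evalOne (I ^ t.unop.unop)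
          naturality := fun _ _ _ =>
            (e.inv.naturality_assoc _ _).trans (Category.comp_id (e.inv.app _ ≫ _)).symm } }

lemma homToLocalCohomologyZero_comp_localCohomologyZeroEval (t : ℕᵒᵖᵒᵖ) :
    homToLocalCohomologyZero I t ≫ localCohomologyZeroEval I = evalOne _ := by
  have := localCohomology.hasColimitDiagram.{u, 0} (localCohomology.idealPowersDiagram I) 0
  refine (Category.assoc _ _ _).trans ((congrArg _ (colimit.ι_desc _ t)).trans ?_)
  exact ((linearCoyonedaIsoExtZero R (ModuleCat.{u} R)).app _).hom_inv_id_assoc _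

lemma localCohomologyZeroEval_homToLocalCohomologyZero {M : ModuleCat.{u} R} (t : ℕᵒᵖᵒᵖ)
    (φ : ModuleCat.of R (R ⧸ I ^ t.unop.unop) ⟶ M) :
    (localCohomologyZeroEval I).app M ((homToLocalCohomologyZero I t).app M φ) =
      φ (Ideal.Quotient.mk _ 1) :=
  congr($(congr_app (homToLocalCohomologyZero_comp_localCohomologyZeroEval I t) M) φ)

lemma localCohomologyZeroEval_app_injective (M : ModuleCat.{u} R) :
    Function.Injective ((localCohomologyZeroEval I).app M) := by
  refine (injective_iff_map_eq_zero ((localCohomologyZeroEval I).app M).hom).2 fun x hx => ?_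
  obtain ⟨t, φ, rfl⟩ := exists_homToLocalCohomologyZero_app_eq I x
  have hφ : φ (Ideal.Quotient.mk _ 1) = 0 :=
    (localCohomologyZeroEval_homToLocalCohomologyZero I t φ).symm.trans hx
  have : φ = 0 := by
    ext
    exact hφ
  rw [this]
  exact map_zero ((homToLocalCohomologyZero I t).app M).hom

lemma mem_range_localCohomologyZeroEval_app {M : ModuleCat.{u} R} {m : M} :
    m ∈ LinearMap.range ((localCohomologyZeroEval I).app M).hom ↔
      ∃ t : ℕ, ∀ a ∈ I ^ t, a • m = 0 := by
  constructor
  · rintro ⟨x, rfl⟩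
    obtain ⟨t, φ, rfl⟩ := exists_homToLocalCohomologyZero_app_eq I x
    refine ⟨t.unop.unop, fun a ha => ?_⟩
    have ha' : a • Ideal.Quotient.mk (I ^ t.unop.unop) 1 = 0 :=
      Ideal.Quotient.eq_zero_iff_mem.2 (by simpa using ha)
    exact ((congrArg (a • ·) (localCohomologyZeroEval_homToLocalCohomologyZero I t φ)).trans
      (map_smul φ.hom a _).symm).trans ((congrArg φ ha').trans (map_zero φ.hom))
  · rintro ⟨t, ht⟩
    let φ : (R ⧸ I ^ t) →ₗ[R] M := (I ^ t).liftQ (LinearMap.toSpanSingleton R M m) ht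
    refine ⟨(homToLocalCohomologyZero I (op (op t))).app M (ModuleCat.ofHom φ), ?_⟩
    refine (localCohomologyZeroEval_homToLocalCohomologyZero I (op (op t)) _).trans ?_
    exact one_smul R m

end LocalCohomologyZero

/-- The local cohomology module `Hⁱ_I(M)` of an unbundled module. -/
noncomputable abbrev LocalCohomology {R : Type u} [CommRing R] (I : Ideal R) (i : ℕ) (M : Type u)
    [AddCommGroup M] [Module R M] : Type u :=
  (localCohomology I i).obj (ModuleCat.of R M)

namespace LocalCohomology

variable {R : Type u} [CommRing R] (I : Ideal R) {M N P : Type u} [AddCommGroup M] [Module R M]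
  [AddCommGroup N] [Module R N] [AddCommGroup P] [Module R P]

/-- The action of `Hⁱ_I` on linear maps. -/
noncomputable def map (i : ℕ) (f : M →ₗ[R] N) : LocalCohomology I i M →ₗ[R] LocalCohomology I i N :=
  ((localCohomology I i).map (ModuleCat.ofHom f)).hom

variable {I} in
lemma map_lsmul {i : ℕ} (a : R) (x : LocalCohomology I i M) :
    map I i (LinearMap.lsmul R M a) x = a • x :=
  congr($(localCohomology_map_smul_id I i (ModuleCat.of R M) a) x)

lemma subsingleton_succ_of_injective [Module.Injective R M] (i : ℕ) :
    Subsingleton (LocalCohomology I (i + 1) M) :=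
  have := Module.injective_object_of_injective_module R M
  subsingleton_localCohomology_succ_of_injective I i (ModuleCat.of R M)

section LongExactSequence

lemma shortExact_ofHom {f : M →ₗ[R] N} {g : N →ₗ[R] P} (hf : Function.Injective f)
    (hfg : Function.Exact f g) (hg : Function.Surjective g) :
    (ShortComplex.mk (ModuleCat.ofHom f) (ModuleCat.ofHom g)
      (exactPair_iff_function_exact.2 hfg).1).ShortExact where
  exact := (exactPair_iff_function_exact.2 hfg).2
  mono_f := (ModuleCat.mono_iff_injective _).2 hf
  epi_g := (ModuleCat.epi_iff_surjective _).2 hg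

variable {f : M →ₗ[R] N} {g : N →ₗ[R] P} (hf : Function.Injective f) (hfg : Function.Exact f g)
  (hg : Function.Surjective g) (i : ℕ)

/-- The connecting homomorphism `Hⁱ_I(P) → Hⁱ⁺¹_I(M)` of an exact sequence `0 → M → N → P → 0`. -/
noncomputable def δ : LocalCohomology I i P →ₗ[R] LocalCohomology I (i + 1) M :=
  (localCohomologyδ I (shortExact_ofHom hf hfg hg) i).hom

include hf hfg hg in
lemma map_exact : Function.Exact (map I i f) (map I i g) :=
  exactPair_iff_function_exact.1 (localCohomology_map_exactPair I (shortExact_ofHom hf hfg hg) i)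

lemma map_δ_exact : Function.Exact (map I i g) (δ I hf hfg hg i) :=
  exactPair_iff_function_exact.1
    (localCohomology_map_localCohomologyδ_exactPair I (shortExact_ofHom hf hfg hg) i)

lemma δ_map_exact : Function.Exact (δ I hf hfg hg i) (map I (i + 1) f) :=
  exactPair_iff_function_exact.1
    (localCohomologyδ_localCohomology_map_exactPair I (shortExact_ofHom hf hfg hg) i)

lemma δ_surjective [Subsingleton (LocalCohomology I (i + 1) N)] :
    Function.Surjective (δ I hf hfg hg i) :=
  fun y => (δ_map_exact I hf hfg hg i y).1 (Subsingleton.elim _ _)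

end LongExactSequence

section Zero

variable (M) in
/-- The canonical injection `H⁰_I(M) → M`. -/
noncomputable def zeroEval : LocalCohomology I 0 M →ₗ[R] M :=
  ((localCohomologyZeroEval I).app (ModuleCat.of R M)).hom

variable {I}

lemma zeroEval_injective : Function.Injective (zeroEval I M) :=
  localCohomologyZeroEval_app_injective I (ModuleCat.of R M)

lemma zeroEval_map (f : M →ₗ[R] N) (x : LocalCohomology I 0 M) :
    zeroEval I N (map I 0 f x) = f (zeroEval I M x) :=
  congr($((localCohomologyZeroEval I).naturality (ModuleCat.ofHom f)) x)

lemma range_zeroEval : LinearMap.range (zeroEval I M) = powTorsion I M :=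
  Submodule.ext fun _ => mem_range_localCohomologyZeroEval_app I

variable (I M) in
/-- The isomorphism `H⁰_I(M) ≃ Γ_I(M)`. -/
noncomputable def zeroEquiv : LocalCohomology I 0 M ≃ₗ[R] powTorsion I M :=
  (LinearEquiv.ofInjective (zeroEval I M) zeroEval_injective).trans (.ofEq _ _ range_zeroEval)

lemma subsingleton_zero_of_powTorsion_eq_bot (hM : powTorsion I M = ⊥) :
    Subsingleton (LocalCohomology I 0 M) :=
  have := Submodule.subsingleton_iff_eq_bot.2 hM
  (zeroEquiv I M).subsingleton

lemma map_zero_surjective (hM : IsPowTorsion I M) {f : M →ₗ[R] N} (hf : Function.Surjective f) :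
    Function.Surjective (map I 0 f) := by
  intro y
  obtain ⟨m, hm⟩ := hf (zeroEval I N y)
  obtain ⟨x, hx⟩ := range_zeroEval.ge (hM m)
  exact ⟨x, zeroEval_injective (by rw [zeroEval_map, hx, hm])⟩

end Zero

section Torsion

lemma isPowTorsion (i : ℕ) : IsPowTorsion I (LocalCohomology I i M) := by
  induction i generalizing M with
  | zero =>
    exact (isPowTorsion_powTorsion I M).of_injective (zeroEquiv I M).injective
  | succ i ih =>
    obtain ⟨J, _, _, f, hf, hJ⟩ := exists_injective_linearMap_to_injective R M
    have := subsingleton_succ_of_injective I (M := J) i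
    exact ih.of_surjective (δ_surjective I hf (LinearMap.exact_map_mkQ_range f)
      (Submodule.mkQ_surjective _) i)

variable {I}

lemma subsingleton_succ_of_isPowTorsion [IsNoetherianRing R] (hM : IsPowTorsion I M) (i : ℕ) :
    Subsingleton (LocalCohomology I (i + 1) M) := by
  induction i generalizing M with
  | zero =>
    obtain ⟨J, _, _, f, hf, hJ, hJt⟩ := hM.exists_injective_linearMap_to_injective
    have := subsingleton_succ_of_injective I (M := J) 0
    have hδ := δ_surjective I hf (LinearMap.exact_map_mkQ_range f) (Submodule.mkQ_surjective _) 0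
    refine subsingleton_of_forall_eq 0 (hδ.forall.2 fun y => ?_)
    obtain ⟨x, rfl⟩ := map_zero_surjective hJt (LinearMap.range f).mkQ_surjective y
    exact (map_δ_exact I hf (LinearMap.exact_map_mkQ_range f) _ 0).apply_apply_eq_zero x
  | succ i ih =>
    obtain ⟨J, _, _, f, hf, hJ, hJt⟩ := hM.exists_injective_linearMap_to_injective
    have := subsingleton_succ_of_injective I (M := J) (i + 1)
    have := ih (hJt.of_surjective (Submodule.mkQ_surjective (LinearMap.range f)))
    exact (δ_surjective I hf (LinearMap.exact_map_mkQ_range f) (Submodule.mkQ_surjective _)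
      (i + 1)).subsingleton

variable (M) in
lemma map_mkQ_powTorsion_bijective [IsNoetherianRing R] (i : ℕ) :
    Function.Bijective (map I (i + 1) (powTorsion I M).mkQ) := by
  have h := LinearMap.exact_subtype_mkQ (powTorsion I M)
  have (j : ℕ) := subsingleton_succ_of_isPowTorsion (isPowTorsion_powTorsion I M) j
  have hinj := (powTorsion I M).subtype_injective
  have hsurj := (powTorsion I M).mkQ_surjective
  refine ⟨(injective_iff_map_eq_zero _).2 fun x hx => ?_, fun y => ?_⟩
  · obtain ⟨z, rfl⟩ := (map_exact I hinj h hsurj (i + 1) x).1 hx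
    rw [Subsingleton.elim z 0, map_zero]
  · exact (map_δ_exact I hinj h hsurj (i + 1) y).1 (Subsingleton.elim _ _)

end Torsion

end LocalCohomology

section ArtinianModule

lemma exists_forall_ge_eq_of_antitone {α : Type*} [PartialOrder α] [WellFoundedLT α]
    {L : ℕ → ℕ → α} (h₁ : Antitone L) (h₂ : ∀ j, Antitone (L j)) : ∃ n, ∀ m ≥ n, L m = L n := by
  obtain ⟨k, hk⟩ := WellFoundedLT.antitone_chain_condition (f := fun j => L j j)
    fun i j hij => (h₁ hij j).trans (h₂ i hij)
  choose b hb using fun t =>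
    WellFoundedLT.antitone_chain_condition (f := fun j => L j t) fun _ _ hij => h₁ hij t
  let n := max k ((Finset.range k).sup b)
  refine ⟨n, fun m hm => (h₁ hm).antisymm fun t => ?_⟩
  rcases lt_or_ge t k with ht | ht
  · have hbn : b t ≤ n := (Finset.le_sup (Finset.mem_range.2 ht)).trans (le_max_right _ _)
    exact ((hb t n hbn).symm.trans (hb t m (hbn.trans hm))).le
  · calc L n t ≤ L n k := h₂ n ht
      _ ≤ L k k := h₁ (le_max_left _ _) k
      _ = L (max m t) (max m t) := hk _ (ht.trans (le_max_right _ _))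
      _ ≤ L m (max m t) := h₁ (le_max_left _ _) _
      _ ≤ L m t := h₂ m (le_max_right _ _)

variable {R : Type*} [CommRing R] {M : Type*} [AddCommGroup M] [Module R M]

lemma map_lsmul_pow_antitone (N : Submodule R M) (x : R) :
    Antitone fun t : ℕ => N.map (LinearMap.lsmul R M (x ^ t)) := by
  refine antitone_nat_of_succ_le fun t => ?_
  rintro _ ⟨z, hz, rfl⟩
  exact ⟨x • z, N.smul_mem x hz, by simp only [LinearMap.lsmul_apply, smul_smul, pow_succ]⟩

lemma le_of_forall_map_lsmul_pow_inf_ker_le {x : R} (hx : ∀ m : M, ∃ t : ℕ, x ^ t • m = 0)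
    {N N' : Submodule R M} (hle : N' ≤ N)
    (h : ∀ t : ℕ, N.map (LinearMap.lsmul R M (x ^ t)) ⊓ LinearMap.ker (LinearMap.lsmul R M x) ≤
      N'.map (LinearMap.lsmul R M (x ^ t))) : N ≤ N' := by
  intro z hz
  obtain ⟨t, ht⟩ := hx z
  induction t generalizing z with
  | zero =>
    rw [pow_zero, one_smul] at ht
    exact ht ▸ N'.zero_mem
  | succ t ih =>
    obtain ⟨w, hw, hwz⟩ := h t ⟨⟨z, hz, rfl⟩, by
      rw [SetLike.mem_coe, LinearMap.mem_ker, LinearMap.lsmul_apply, LinearMap.lsmul_apply,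
        smul_smul, ← pow_succ', ht]⟩
    have hzw : z - w ∈ N' :=
      ih (N.sub_mem hz (hle hw)) (by rw [smul_sub, sub_eq_zero]; exact hwz.symm)
    exact sub_add_cancel z w ▸ N'.add_mem hzw hw

-- The slices `xᵗ N ∩ ker x` of a submodule `N` distinguish it from its proper submodules; they
-- decrease both in `t` and along a descending chain of submodules.
lemma isArtinian_of_isArtinian_ker_lsmul (x : R) (hx : ∀ m : M, ∃ t : ℕ, x ^ t • m = 0)
    [IsArtinian R (LinearMap.ker (LinearMap.lsmul R M x))] : IsArtinian R M := by
  rw [← monotone_stabilizes_iff_artinian]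
  intro f
  let N (j : ℕ) : Submodule R M := OrderDual.ofDual (f j)
  have hN : Antitone N := fun _ _ hij => f.monotone hij
  let A := LinearMap.ker (LinearMap.lsmul R M x)
  obtain ⟨n, hn⟩ := exists_forall_ge_eq_of_antitone
    (L := fun j t => ((N j).map (LinearMap.lsmul R M (x ^ t))).submoduleOf A)
    (fun _ _ hij t => Submodule.comap_mono (Submodule.map_mono (hN hij)))
    (fun j _ _ hst => Submodule.comap_mono (map_lsmul_pow_antitone (N j) x hst))
  refine ⟨n, fun m hm => (f.monotone hm).antisymm ?_⟩
  exact le_of_forall_map_lsmul_pow_inf_ker_le hx (hN hm) fun t y hy =>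
    (congrFun (hn m hm) t).ge (x := ⟨y, hy.2⟩) hy.1

lemma isArtinianRing_quotient_pow [IsNoetherianRing R] (P : Ideal R) [P.IsMaximal] (k : ℕ) :
    IsArtinianRing (R ⧸ P ^ k) :=
  have : Ring.KrullDimLE 0 (R ⧸ P ^ k) := Ring.krullDimLE_zero_iff.2 fun J hJ =>
    have hPJ : P ≤ J.comap (Ideal.Quotient.mk (P ^ k)) :=
      (hJ.comap _).le_of_pow_le ((P ^ k).mk_ker.ge.trans (Ideal.ker_le_comap _))
    Ideal.isMaximal_of_isIntegral_of_isMaximal_comap _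
      (Ideal.IsMaximal.eq_of_le ‹_› (hJ.comap _).ne_top hPJ ▸ ‹P.IsMaximal›)
  IsNoetherianRing.isArtinianRing_of_krullDimLE_zero

lemma isNoetherian_iff_isArtinian_of_le_annihilator {J : Ideal R} [IsArtinianRing (R ⧸ J)]
    (hJ : J ≤ Module.annihilator R M) : IsNoetherian R M ↔ IsArtinian R M := by
  have hM : Module.IsTorsionBySet R M J := fun m a => Module.mem_annihilator.1 (hJ a.2) m
  let _ := hM.module
  have hid : Function.Bijective hM.semilinearMap := Function.bijective_id
  rw [hM.semilinearMap.isNoetherian_iff_of_bijective hid,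
    hM.semilinearMap.isArtinian_iff_of_bijective hid]
  exact IsSemiprimaryRing.isNoetherian_iff_isArtinian

end ArtinianModule

section SecondaryModule

/-- A module is secondary if it is nonzero and each ring element acts on it either surjectively or
nilpotently. -/
def IsSecondary (R H : Type*) [CommRing R] [AddCommGroup H] [Module R H] : Prop :=
  Nontrivial H ∧ ∀ r : R,
    (Function.Surjective fun h : H => r • h) ∨ r ∈ (Module.annihilator R H).radical

variable {R : Type*} [CommRing R] {H : Type*} [AddCommGroup H] [Module R H]

lemma notMem_radical_annihilator_of_surjective_smul [Nontrivial H] {r : R}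
    (hr : Function.Surjective fun h : H => r • h) : r ∉ (Module.annihilator R H).radical := by
  rintro ⟨n, hn⟩
  have hpow : Function.Surjective fun h : H => r ^ n • h := smul_iterate (α := H) r n ▸ hr.iterate n
  obtain ⟨h, hh⟩ := exists_ne (0 : H)
  obtain ⟨y, rfl⟩ := hpow h
  exact hh (Module.mem_annihilator.1 hn y)

lemma IsSecondary.isPrime_radical_annihilator (hH : IsSecondary R H) :
    (Module.annihilator R H).radical.IsPrime := by
  obtain ⟨_, hH⟩ := hH
  refine ⟨?_, fun {r s} hrs => ?_⟩
  · rw [Ne, Ideal.radical_eq_top, Module.annihilator_eq_top_iff]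
    exact not_subsingleton H
  · refine or_iff_not_imp_left.2 fun hr => (hH s).resolve_left fun hs => ?_
    have hrs' : Function.Surjective fun h : H => (r * s) • h := by
      simpa only [mul_smul, Function.comp_def] using ((hH r).resolve_right hr).comp hs
    exact notMem_radical_annihilator_of_surjective_smul hrs' hrs

lemma isSecondary_of_supIrred [IsArtinian R H] {S : Submodule R H} (hS : SupIrred S) :
    IsSecondary R S := by
  refine ⟨Submodule.nontrivial_iff_ne_bot.2 hS.ne_bot, fun r => ?_⟩
  obtain ⟨n, hn, hn1⟩ := ((LinearMap.eventually_codisjoint_ker_pow_range_pow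
    (LinearMap.lsmul R S r)).and (Filter.eventually_ge_atTop 1)).exists
  have hsup := congrArg (Submodule.map S.subtype) hn.eq_top
  rw [Submodule.map_sup, Submodule.map_subtype_top] at hsup
  have htop {Q : Submodule R S} (hQ : Q.map S.subtype = S) : Q = ⊤ :=
    Submodule.map_injective_of_injective S.subtype_injective (hQ.trans S.map_subtype_top.symm)
  rcases hS.2 hsup with hker | hrange
  · refine Or.inr ⟨n, Module.mem_annihilator.2 fun y => ?_⟩
    have hy := LinearMap.congr_fun (LinearMap.ker_eq_top.1 (htop hker)) y
    exact (smul_iterate_apply r n y).symm.trans ((Module.End.pow_apply _ n y).symm.trans hy)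
  · refine Or.inl (Function.Surjective.of_comp (f := ⇑(LinearMap.lsmul R S r))
      (g := ⇑(LinearMap.lsmul R S r ^ (n - 1))) ?_)
    rw [← Module.End.coe_mul, ← pow_succ', Nat.sub_add_cancel hn1]
    exact LinearMap.range_eq_top.1 (htop hrange)

open scoped Pointwise

lemma IsSecondary.exists_pow_smul_le {S : Submodule R H} (hS : IsSecondary R S) {K : Ideal R}
    (hK : K.FG) : ∃ k : ℕ, ∀ x : R, (¬ K ≤ (Module.annihilator R S).radical →
      x ∉ (Module.annihilator R S).radical) → K ^ k • S ≤ x • ⊤ := by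
  by_cases hKS : K ≤ (Module.annihilator R S).radical
  · obtain ⟨k, hk⟩ := Ideal.exists_pow_le_of_le_radical_of_fg hKS hK
    exact ⟨k, fun x _ => (Submodule.le_annihilator_iff.1 hk).trans_le bot_le⟩
  · refine ⟨0, fun x hx => ?_⟩
    rw [pow_zero, Ideal.one_eq_top, Submodule.top_smul]
    intro y hy
    obtain ⟨z, hz⟩ := (hS.2 x).resolve_right (hx hKS) ⟨y, hy⟩
    exact ⟨z, trivial, congrArg Subtype.val hz⟩

lemma exists_finite_primes_pow_smul_top_le {K : Ideal R} (hK : K.FG) (H : Type*)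
    [AddCommGroup H] [Module R H] [IsArtinian R H] :
    ∃ T : Set (Ideal R), T.Finite ∧ (∀ p ∈ T, p.IsPrime ∧ ¬ K ≤ p) ∧ ∃ k : ℕ, ∀ x : R,
      (∀ p ∈ T, x ∉ p) → K ^ k • (⊤ : Submodule R H) ≤ x • ⊤ := by
  obtain ⟨s, hs, hirr⟩ := exists_supIrred_decomposition (⊤ : Submodule R H)
  have hsec (S : s) : IsSecondary R (S : Submodule R H) := isSecondary_of_supIrred (hirr S.2)
  choose k hk using fun S : s => (hsec S).exists_pow_smul_le hK
  let att (S : s) : Ideal R := (Module.annihilator R (S : Submodule R H)).radical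
  refine ⟨{p ∈ Set.range att | ¬ K ≤ p}, (Set.finite_range att).subset fun p hp => hp.1, ?_,
    Finset.univ.sup k, fun x hx => ?_⟩
  · rintro _ ⟨⟨S, rfl⟩, hKS⟩
    exact ⟨(hsec S).isPrime_radical_annihilator, hKS⟩
  · refine (smul_mono_right (K ^ Finset.univ.sup k) hs.ge).trans ?_
    simp only [Finset.sup_eq_iSup, Submodule.smul_iSup, iSup_le_iff, id]
    intro S hS
    have hkS : k ⟨S, hS⟩ ≤ Finset.univ.sup k := Finset.le_sup (Finset.mem_univ _)
    exact (Submodule.smul_mono_left (Ideal.pow_le_pow_right hkS)).trans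
      (hk ⟨S, hS⟩ x fun hKS => hx _ ⟨⟨_, rfl⟩, hKS⟩)

open IsLocalRing in
lemma exists_finite_primes_finite_quotSMulTop [IsLocalRing R] [IsNoetherianRing R] (H : Type*)
    [AddCommGroup H] [Module R H] [IsArtinian R H] :
    ∃ T : Set (Ideal R), T.Finite ∧ (∀ p ∈ T, p.IsPrime ∧ ¬ maximalIdeal R ≤ p) ∧
      ∀ x : R, (∀ p ∈ T, x ∉ p) → Module.Finite R (QuotSMulTop x H) := by
  obtain ⟨T, hT, hTp, k, hk⟩ :=
    exists_finite_primes_pow_smul_top_le (IsNoetherian.noetherian (maximalIdeal R)) H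
  refine ⟨T, hT, hTp, fun x hx => ?_⟩
  have := isArtinianRing_quotient_pow (maximalIdeal R) k
  have hann : maximalIdeal R ^ k ≤ Module.annihilator R (QuotSMulTop x H) := by
    rw [Submodule.annihilator_quotient]
    exact fun a ha => Submodule.mem_colon.2 fun h _ =>
      hk x hx (Submodule.smul_mem_smul ha trivial)
  have : IsArtinian R (QuotSMulTop x H) := inferInstanceAs (IsArtinian R (H ⧸ _))
  have := (isNoetherian_iff_isArtinian_of_le_annihilator hann).2 this
  infer_instance

end SecondaryModule

section RegularElement

variable {R : Type*} [CommRing R]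

lemma exists_mem_notMem_of_finite_primes (K : Ideal R) {T : Set (Ideal R)} (hT : T.Finite)
    (hp : ∀ p ∈ T, p.IsPrime ∧ ¬ K ≤ p) : ∃ x ∈ K, ∀ p ∈ T, x ∉ p := by
  by_contra! h
  obtain ⟨p, hpT, hKp⟩ := (Ideal.subset_union_prime_finite hT (f := id) ⊤ ⊤ fun p hpT _ _ =>
    (hp p hpT).1).1 fun x hx => Set.mem_iUnion₂.2 (by simpa only [exists_prop] using! h x hx)
  exact (hp p hpT).2 hKp

variable {I : Ideal R} {M : Type*} [AddCommGroup M] [Module R M]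

lemma not_le_of_mem_associatedPrimes [IsNoetherianRing R] (hM : powTorsion I M = ⊥) {p : Ideal R}
    (hp : p ∈ associatedPrimes R M) : ¬ I ≤ p := by
  intro hIp
  obtain ⟨hprime, m, rfl⟩ := isAssociatedPrime_iff.1 hp
  have hm : m ∈ powTorsion I M := ⟨1, fun a ha => by
    rw [pow_one] at ha
    simpa only [Submodule.mem_bot] using Submodule.mem_colon_singleton.1 (hIp ha)⟩
  rw [hM, Submodule.mem_bot] at hm
  exact hprime.ne_top (by simp [hm])

lemma exists_mem_isSMulRegular_of_powTorsion_eq_bot [IsNoetherianRing R] [Module.Finite R M]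
    (hM : powTorsion I M = ⊥) {K : Ideal R} (hIK : I ≤ K) {T : Set (Ideal R)} (hT : T.Finite)
    (hp : ∀ p ∈ T, p.IsPrime ∧ ¬ K ≤ p) :
    ∃ x ∈ K, IsSMulRegular M x ∧ ∀ p ∈ T, x ∉ p := by
  obtain ⟨x, hxK, hx⟩ := exists_mem_notMem_of_finite_primes K
    (hT.union (associatedPrimes.finite R M)) fun p h => h.elim (hp p) fun h =>
      ⟨h.1, fun hKp => not_le_of_mem_associatedPrimes hM h (hIK.trans hKp)⟩
  refine ⟨x, hxK, not_not.1 fun hreg => ?_, fun p h => hx p (Or.inl h)⟩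
  obtain ⟨p, hpA, hxp⟩ := Set.mem_iUnion₂.1
    ((biUnion_associatedPrimes_eq_compl_regular R M).ge hreg)
  exact hx p (Or.inr hpA) hxp

end RegularElement

section Dimension

variable {R : Type*} [CommRing R] {M N : Type*} [AddCommGroup M] [Module R M] [AddCommGroup N]
  [Module R N]

lemma supportDim_le_of_support_subset (h : Module.support R M ⊆ Module.support R N) :
    Module.supportDim R M ≤ Module.supportDim R N :=
  Order.krullDim_le_of_strictMono (Set.inclusion h) fun _ _ h => h

lemma length_le_supportDim_of_head_mem_support (l : LTSeries (PrimeSpectrum R))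
    (hl : l.head ∈ Module.support R M) : (l.length : WithBot ℕ∞) ≤ Module.supportDim R M :=
  Order.le_krullDim_iff.2 ⟨⟨l.length, fun i => ⟨l i, Module.mem_support_mono (l.head_le i) hl⟩,
    fun i => l.step i⟩, rfl⟩

lemma supportDim_eq_max_submodule_quotient (N : Submodule R M) :
    Module.supportDim R M = max (Module.supportDim R N) (Module.supportDim R (M ⧸ N)) := by
  have hsupp := Module.support_of_exact (LinearMap.exact_subtype_mkQ N) N.injective_subtype
    N.mkQ_surjective
  refine le_antisymm (iSup_le fun l => ?_) (max_le
    (Module.supportDim_le_of_injective _ N.subtype_injective)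
    (Module.supportDim_le_of_surjective _ N.mkQ_surjective))
  let l' : LTSeries (PrimeSpectrum R) := l.map Subtype.val fun _ _ h => h
  rcases hsupp.le (show l'.head ∈ Module.support R M from l.head.2) with hN | hQ
  · exact le_max_of_le_left (length_le_supportDim_of_head_mem_support l' hN)
  · exact le_max_of_le_right (length_le_supportDim_of_head_mem_support l' hQ)

lemma supportDim_quotient_smul_top_mono [Module.Finite R M] [Module.Finite R N] (I : Ideal R)
    (h : Module.support R N ⊆ Module.support R M) :
    Module.supportDim R (N ⧸ (I • (⊤ : Submodule R N))) ≤
      Module.supportDim R (M ⧸ (I • (⊤ : Submodule R M))) := by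
  refine supportDim_le_of_support_subset ?_
  rw [Module.support_quotient, Module.support_quotient]
  exact Set.inter_subset_inter_left _ h

variable (M) in
lemma supportDim_powTorsion_le [IsNoetherianRing R] [Module.Finite R M] (I : Ideal R) :
    Module.supportDim R (powTorsion I M) ≤
      Module.supportDim R (M ⧸ (I • (⊤ : Submodule R M))) := by
  obtain ⟨t, ht⟩ := (isPowTorsion_powTorsion I M).exists_pow_le_annihilator
  refine supportDim_le_of_support_subset ?_
  rw [Module.support_quotient]
  exact Set.subset_inter (Module.support_subset_of_injective _ (Submodule.injective_subtype _))
    fun p hp => p.2.le_of_pow_le (ht.trans (Module.annihilator_le_of_mem_support hp))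

lemma supportDim_quotient_powTorsion [IsNoetherianRing R] [Module.Finite R M] {I : Ideal R}
    (h : Module.supportDim R (M ⧸ (I • (⊤ : Submodule R M))) < Module.supportDim R M) :
    Module.supportDim R (M ⧸ powTorsion I M) = Module.supportDim R M := by
  have hmax := supportDim_eq_max_submodule_quotient (powTorsion I M)
  rcases max_choice (Module.supportDim R (powTorsion I M))
    (Module.supportDim R (M ⧸ powTorsion I M)) with h' | h'
  · exact absurd (hmax.trans h').le (not_le.2 ((supportDim_powTorsion_le M I).trans_lt h))
  · exact (hmax.trans h').symm

open IsLocalRing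

variable [IsLocalRing R]

lemma exists_maximalIdeal_pow_le_annihilator [IsNoetherianRing R] [Module.Finite R M]
    (h : Module.supportDim R M ≤ 0) : ∃ s : ℕ, maximalIdeal R ^ s ≤ Module.annihilator R M := by
  refine Ideal.exists_pow_le_of_le_radical_of_fg ?_ (IsNoetherian.noetherian _)
  rw [← PrimeSpectrum.zeroLocus_subset_zeroLocus_iff, ← Module.support_eq_zeroLocus]
  intro p hp
  have hpc : p ≤ closedPoint R := le_maximalIdeal p.2.ne_top
  have hmax := Order.krullDim_nonpos_iff_forall_isMax.1 h ⟨p, hp⟩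
  exact hmax (b := ⟨closedPoint R, Module.mem_support_mono hpc hp⟩) hpc

lemma not_maximalIdeal_le_of_mem_minimalPrimes (h : 0 < Module.supportDim R M) {p : Ideal R}
    (hp : p ∈ (Module.annihilator R M).minimalPrimes) : ¬ maximalIdeal R ≤ p := by
  intro hmp
  have hle (a : PrimeSpectrum R) : a.asIdeal ≤ p := (le_maximalIdeal a.2.ne_top).trans hmp
  refine not_le.2 h (Order.krullDim_nonpos_iff_forall_isMax.2 fun a b _ => (hle b.1).trans ?_)
  exact hp.2 ⟨a.1.2, Module.annihilator_le_of_mem_support a.2⟩ (hle a.1)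

end Dimension

section Finiteness

open IsLocalRing
open scoped Pointwise

variable {R : Type u} [CommRing R] {I : Ideal R} {M : Type u} [AddCommGroup M] [Module R M]

lemma exact_lsmul_mkQ (x : R) : Function.Exact (LinearMap.lsmul R M x)
    (x • (⊤ : Submodule R M)).mkQ := fun y => by
  rw [Submodule.mkQ_apply, Submodule.Quotient.mk_eq_zero, Submodule.mem_smul_pointwise_iff_exists]
  exact ⟨fun ⟨z, _, hz⟩ => ⟨z, hz⟩, fun ⟨z, hz⟩ => ⟨z, Submodule.mem_top, hz⟩⟩

namespace LocalCohomology

lemma isArtinian_succ_of_isSMulRegular {x : R} (hxI : x ∈ I) (hx : IsSMulRegular M x) (i : ℕ)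
    [IsArtinian R (LocalCohomology I i (QuotSMulTop x M))] :
    IsArtinian R (LocalCohomology I (i + 1) M) := by
  have hδ := δ_map_exact I (f := LinearMap.lsmul R M x) hx (exact_lsmul_mkQ x)
    (x • (⊤ : Submodule R M)).mkQ_surjective i
  have hker : LinearMap.ker (LinearMap.lsmul R (LocalCohomology I (i + 1) M) x) =
      LinearMap.range (δ I (f := LinearMap.lsmul R M x) hx (exact_lsmul_mkQ x)
        (x • (⊤ : Submodule R M)).mkQ_surjective i) :=
    (congrArg LinearMap.ker (LinearMap.ext fun y => (map_lsmul x y).symm)).trans hδ.linearMap_ker_eq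
  have : IsArtinian R (LinearMap.ker (LinearMap.lsmul R (LocalCohomology I (i + 1) M) x)) :=
    hker ▸ inferInstance
  refine isArtinian_of_isArtinian_ker_lsmul x fun y => ?_
  obtain ⟨t, ht⟩ := isPowTorsion I (i + 1) y
  exact ⟨t, ht _ (Ideal.pow_mem_pow hxI t)⟩

lemma finite_quotSMulTop [IsNoetherianRing R] {x : R} (hx : IsSMulRegular M x) (i : ℕ)
    [Module.Finite R (QuotSMulTop x (LocalCohomology I i M))]
    [Module.Finite R (LocalCohomology I (i + 1) M)] :
    Module.Finite R (LocalCohomology I i (QuotSMulTop x M)) := by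
  have hsurj := (x • (⊤ : Submodule R M)).mkQ_surjective
  let f := LinearMap.lsmul R M x
  have hf : Function.Injective f := hx
  let g := map I i (x • (⊤ : Submodule R M)).mkQ
  have hle : x • (⊤ : Submodule R (LocalCohomology I i M)) ≤ LinearMap.ker g := by
    rintro _ ⟨z, -, rfl⟩
    exact (congrArg g (map_lsmul x z).symm).trans
      ((map_exact I hf (exact_lsmul_mkQ x) hsurj i).apply_apply_eq_zero z)
  have hker : (LinearMap.ker (δ I hf (exact_lsmul_mkQ x) hsurj i)).FG := by
    rw [(map_δ_exact I hf (exact_lsmul_mkQ x) hsurj i).linearMap_ker_eq,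
      ← Submodule.range_liftQ _ g hle]
    exact Module.Finite.iff_fg.1 inferInstance
  refine ⟨Submodule.fg_of_fg_map_of_fg_inf_ker (δ I hf (exact_lsmul_mkQ x) hsurj i)
    (IsNoetherian.noetherian _) ?_⟩
  rwa [top_inf_eq]

lemma forall_gt_finite_quotSMulTop [IsNoetherianRing R] {x : R} (hx : IsSMulRegular M x) {k : ℕ}
    [Module.Finite R (QuotSMulTop x (LocalCohomology I (k + 1) M))]
    (hfin : ∀ i > k + 1, Module.Finite R (LocalCohomology I i M)) :
    ∀ i > k, Module.Finite R (LocalCohomology I i (QuotSMulTop x M)) := by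
  intro i hi
  have := hfin (i + 1) (Nat.succ_lt_succ hi)
  rcases (Nat.succ_le_of_lt hi).eq_or_lt with rfl | hi
  · exact finite_quotSMulTop hx (k + 1)
  · have := hfin i hi
    exact finite_quotSMulTop hx i

variable [IsNoetherianRing R]

lemma forall_gt_finite_quotient_powTorsion {k : ℕ}
    (hfin : ∀ i > k, Module.Finite R (LocalCohomology I i M)) :
    ∀ i > k, Module.Finite R (LocalCohomology I i (M ⧸ powTorsion I M)) := by
  intro i hi
  obtain ⟨i, rfl⟩ := Nat.exists_eq_add_one_of_ne_zero (Nat.ne_zero_of_lt hi)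
  have := hfin _ hi
  exact Module.Finite.of_surjective _ (map_mkQ_powTorsion_bijective M i).2

variable [IsLocalRing R] [Module.Finite R M]

lemma isArtinian (hM : Module.supportDim R (M ⧸ (I • (⊤ : Submodule R M))) ≤ 0) (i : ℕ) :
    IsArtinian R (LocalCohomology I i M) := by
  induction i generalizing M with
  | zero =>
    obtain ⟨s, hs⟩ :=
      exists_maximalIdeal_pow_le_annihilator ((supportDim_powTorsion_le M I).trans hM)
    have := isArtinianRing_quotient_pow (maximalIdeal R) s
    have := (isNoetherian_iff_isArtinian_of_le_annihilator hs).1 inferInstance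
    exact isArtinian_of_linearEquiv (zeroEquiv I M).symm
  | succ i ih =>
    obtain ⟨x, hxI, hx, -⟩ := exists_mem_isSMulRegular_of_powTorsion_eq_bot
      (powTorsion_quotient_powTorsion I M) le_rfl Set.finite_empty fun _ h => h.elim
    have hquot := supportDim_quotient_smul_top_mono I (Module.support_subset_of_surjective
      ((x • ⊤ : Submodule R (M ⧸ powTorsion I M)).mkQ ∘ₗ (powTorsion I M).mkQ)
      ((Submodule.mkQ_surjective _).comp (Submodule.mkQ_surjective _)))
    have := ih (M := QuotSMulTop x (M ⧸ powTorsion I M)) (hquot.trans hM)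
    have := isArtinian_succ_of_isSMulRegular hxI hx i
    exact isArtinian_of_linearEquiv
      (LinearEquiv.ofBijective _ (map_mkQ_powTorsion_bijective M i)).symm

end LocalCohomology

end Finiteness

section NonFiniteness

open IsLocalRing
open scoped Pointwise

variable {R : Type u} [CommRing R] {I : Ideal R} {M N P : Type u} [AddCommGroup M] [Module R M]
  [AddCommGroup N] [Module R N] [AddCommGroup P] [Module R P]

namespace LocalCohomology

-- Here `P = H⁰_I(P)` embeds into `H¹_I(M)`, as `H⁰_I(N) = 0`.
lemma annihilator_one_le_annihilator {f : M →ₗ[R] N} {g : N →ₗ[R] P} (hf : Function.Injective f)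
    (hfg : Function.Exact f g) (hg : Function.Surjective g) (hN : powTorsion I N = ⊥)
    (hP : IsPowTorsion I P) :
    Module.annihilator R (LocalCohomology I 1 M) ≤ Module.annihilator R P := by
  have := subsingleton_zero_of_powTorsion_eq_bot hN
  have hδ : Function.Injective (δ I hf hfg hg 0) := (injective_iff_map_eq_zero _).2 fun z hz => by
    obtain ⟨w, rfl⟩ := (map_δ_exact I hf hfg hg 0 z).1 hz
    rw [Subsingleton.elim w 0, map_zero]
  refine (LinearMap.annihilator_le_of_injective _ hδ).trans
    (LinearMap.annihilator_le_of_surjective (zeroEval I P) fun p => ?_)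
  exact range_zeroEval.ge (hP p)

variable [IsNoetherianRing R] [IsLocalRing R] [Module.Finite R M]

lemma supportDim_quotSMulTop_of_isSMulRegular {x : R} (hx : IsSMulRegular M x)
    (hxm : x ∈ maximalIdeal R) {n : ℕ} (hn : Module.supportDim R M = (n + 1 : ℕ)) :
    Module.supportDim R (QuotSMulTop x M) = n := by
  have h := Module.supportDim_quotSMulTop_succ_eq_supportDim hx hxm
  rw [hn, Nat.cast_add, Nat.cast_one] at h
  exact ENat.WithBot.add_one_cancel.1 h

lemma not_finite_one (hI : I ≤ maximalIdeal R) (hM : powTorsion I M = ⊥)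
    (hdim : Module.supportDim R M = (1 : ℕ)) : ¬ Module.Finite R (LocalCohomology I 1 M) := by
  intro hfin
  obtain ⟨x, hxI, hx, -⟩ := exists_mem_isSMulRegular_of_powTorsion_eq_bot hM le_rfl
    Set.finite_empty fun _ h => h.elim
  obtain ⟨s, hs⟩ := (isPowTorsion I 1 (M := M)).exists_pow_le_annihilator
  obtain ⟨r, hr⟩ := exists_maximalIdeal_pow_le_annihilator
    (supportDim_quotSMulTop_of_isSMulRegular (hx.pow (s + 1))
      (Ideal.pow_mem_of_mem _ (hI hxI) _ s.succ_pos) hdim).le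
  have htors : IsPowTorsion I (QuotSMulTop (x ^ (s + 1)) M) := fun q =>
    ⟨r, fun a ha => Module.mem_annihilator.1 (hr (Ideal.pow_right_mono hI r ha)) q⟩
  have hann : x ^ s ∈ Module.annihilator R (QuotSMulTop (x ^ (s + 1)) M) :=
    annihilator_one_le_annihilator (f := LinearMap.lsmul R M (x ^ (s + 1))) (hx.pow (s + 1))
      (exact_lsmul_mkQ _) (Submodule.mkQ_surjective _) hM htors (hs (Ideal.pow_mem_pow hxI s))
  have hdiv : (⊤ : Submodule R M) ≤ maximalIdeal R • ⊤ := fun m _ => by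
    obtain ⟨m', -, hm' : x ^ (s + 1) • m' = x ^ s • m⟩ := (Submodule.Quotient.mk_eq_zero _).1
      (Module.mem_annihilator.1 hann (Submodule.Quotient.mk m))
    rw [pow_succ, mul_smul] at hm'
    exact hx.pow s hm' ▸ Submodule.smul_mem_smul (hI hxI) trivial
  have hbot := Submodule.eq_bot_of_le_smul_of_le_jacobson_bot _ _ Module.Finite.fg_top hdiv
    (jacobson_eq_maximalIdeal ⊥ bot_ne_top).ge
  have : Subsingleton M := (Submodule.subsingleton_iff R).1 (subsingleton_of_bot_eq_top hbot.symm)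
  rw [Module.supportDim_eq_bot_of_subsingleton] at hdim
  exact WithBot.bot_ne_coe hdim

lemma exists_isSMulRegular_forall_gt_finite_quotSMulTop (hI : I ≤ maximalIdeal R)
    (hM : powTorsion I M = ⊥) (hquot : Module.supportDim R (M ⧸ (I • (⊤ : Submodule R M))) ≤ 0)
    {k : ℕ} (hfin : ∀ i > k + 1, Module.Finite R (LocalCohomology I i M)) :
    ∃ x ∈ maximalIdeal R, IsSMulRegular M x ∧
      ∀ i > k, Module.Finite R (LocalCohomology I i (QuotSMulTop x M)) := by
  have := isArtinian hquot (k + 1)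
  obtain ⟨T, hT, hTp, hTfin⟩ := exists_finite_primes_finite_quotSMulTop (R := R)
    (LocalCohomology I (k + 1) M)
  obtain ⟨x, hxm, hx, hxT⟩ := exists_mem_isSMulRegular_of_powTorsion_eq_bot hM hI hT hTp
  have := hTfin x hxT
  exact ⟨x, hxm, hx, forall_gt_finite_quotSMulTop hx hfin⟩

lemma exists_isSMulRegular_supportDim_add_one_le (hI : I ≤ maximalIdeal R)
    (hM : powTorsion I M = ⊥)
    (hquot : 0 < Module.supportDim R (M ⧸ (I • (⊤ : Submodule R M)))) :
    ∃ x ∈ maximalIdeal R, IsSMulRegular M x ∧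
      Module.supportDim R (QuotSMulTop x M ⧸ (I • (⊤ : Submodule R (QuotSMulTop x M)))) + 1 ≤
        Module.supportDim R (M ⧸ (I • (⊤ : Submodule R M))) := by
  obtain ⟨x, hxm, hx, hxT⟩ := exists_mem_isSMulRegular_of_powTorsion_eq_bot hM hI
    (Ideal.finite_minimalPrimes_of_isNoetherianRing R _)
    fun p hp => ⟨hp.1.1, not_maximalIdeal_le_of_mem_minimalPrimes hquot hp⟩
  refine ⟨x, hxm, hx, le_trans (add_le_add_left (supportDim_le_of_support_subset ?_) 1)
    (Module.supportDim_quotSMulTop_succ_le_of_notMem_minimalPrimes hxT)⟩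
  rw [Module.support_quotient, Module.support_quotSMulTop, Module.support_quotSMulTop,
    Module.support_quotient, Set.inter_right_comm]

theorem not_forall_gt_finite (hI : I ≤ maximalIdeal R) {d k : ℕ}
    (hdim : Module.supportDim R M = (d + k + 1 : ℕ))
    (hquot : Module.supportDim R (M ⧸ (I • (⊤ : Submodule R M))) ≤ d) :
    ¬ ∀ i > k, Module.Finite R (LocalCohomology I i M) := by
  intro hfin
  induction hn : d + k using Nat.strong_induction_on generalizing M d k with | h n ih =>
  let Q := M ⧸ powTorsion I M
  have hQ : powTorsion I Q = ⊥ := powTorsion_quotient_powTorsion I M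
  have hQdim : Module.supportDim R Q = (n + 1 : ℕ) := by
    rw [supportDim_quotient_powTorsion, hdim, hn]
    exact hquot.trans_lt (hdim ▸ Nat.cast_lt.2 (by lia))
  have hQquot : Module.supportDim R (Q ⧸ (I • (⊤ : Submodule R Q))) ≤ d :=
    (supportDim_quotient_smul_top_mono I (Module.support_subset_of_surjective _
      (powTorsion I M).mkQ_surjective)).trans hquot
  have hQfin : ∀ i > k, Module.Finite R (LocalCohomology I i Q) :=
    forall_gt_finite_quotient_powTorsion hfin
  rcases n with _ | n
  · exact not_finite_one hI hQ hQdim (hQfin 1 (by lia))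
  have hdimx {x : R} (hxm : x ∈ maximalIdeal R) (hx : IsSMulRegular Q x) :=
    supportDim_quotSMulTop_of_isSMulRegular hx hxm hQdim
  rcases le_or_gt (Module.supportDim R (Q ⧸ (I • (⊤ : Submodule R Q)))) 0 with h0 | hpos
  · obtain ⟨x, hxm, hx, hxfin⟩ := exists_isSMulRegular_forall_gt_finite_quotSMulTop hI hQ h0
      (k := n) fun i hi => hQfin i (by lia)
    have hxquot := supportDim_quotient_smul_top_mono I (Module.support_subset_of_surjective _
      (Submodule.mkQ_surjective (x • ⊤ : Submodule R Q)))
    exact ih n n.lt_succ_self (d := 0) (k := n) (by rw [hdimx hxm hx, Nat.zero_add])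
      (hxquot.trans h0) hxfin n.zero_add
  · obtain ⟨d, rfl⟩ : ∃ d', d = d' + 1 :=
      Nat.exists_eq_add_one_of_ne_zero (Nat.cast_pos.1 (hpos.trans_le hQquot)).ne'
    obtain ⟨x, hxm, hx, hxd⟩ := exists_isSMulRegular_supportDim_add_one_le hI hQ hpos
    rw [Nat.cast_add, Nat.cast_one] at hQquot
    have hxquot := ENat.WithBot.add_le_add_one_right_iff.1 (hxd.trans hQquot)
    have := hQfin (k + 1) k.lt_succ_self
    exact ih n n.lt_succ_self (d := d) (k := k) (by rw [hdimx hxm hx]; congr 1; lia) hxquot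
      (forall_gt_finite_quotSMulTop hx fun i hi => hQfin i (by lia)) (by lia)

end LocalCohomology

end NonFiniteness

/-- over a Noetherian local ring, for a finitely generated module `M` of
Krull dimension `n` and an ideal `I` with `dim (M/IM) = d`, we have `n - d ≤ cd(I,M)`. -/
theorem sub_le_cohomologicalDimension
    (R : Type u) [CommRing R] [IsNoetherianRing R] [IsLocalRing R]
    (M : ModuleCat.{u} R) [Module.Finite R M] (I : Ideal R) (n d : ℕ)
    (hn : Order.krullDim (Module.support R M) = (n : WithBot ℕ∞))
    (hd : Order.krullDim
      (Module.support R (M ⧸ (I • (⊤ : Submodule R M)))) = (d : WithBot ℕ∞)) :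
    ((n - d : ℕ) : ℕ∞) ≤ cohomologicalDimension I M := by
  rcases Nat.lt_or_ge d n with hdn | hdn
  · obtain ⟨k, rfl⟩ := Nat.exists_eq_add_of_lt hdn
    by_contra! hlt
    have hI : I ≤ IsLocalRing.maximalIdeal R := IsLocalRing.le_maximalIdeal fun hI => by
      have : Subsingleton (M ⧸ (I • (⊤ : Submodule R M))) := by
        rw [hI, Submodule.top_smul]
        infer_instance
      rw [Module.support_eq_empty, Order.krullDim_eq_bot] at hd
      exact WithBot.bot_ne_coe hd
    have hvanish (i : ℕ) (hi : i > k) : Subsingleton (LocalCohomology I i M) := by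
      by_contra! hne
      have hmem : (i : ℕ∞) ≤ cohomologicalDimension I M := le_sSup ⟨i, rfl, hne⟩
      exact (hmem.trans_lt hlt).not_ge (Nat.cast_le.2 (by lia))
    exact LocalCohomology.not_forall_gt_finite hI hn hd.le fun i hi =>
      have := hvanish i hi
      inferInstance
  · rw [Nat.sub_eq_zero_of_le hdn, Nat.cast_zero]
    exact zero_le
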